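/- Let p be a prime, E a finite extension of ℚ_p with residue field of cardinality q and uniformizer π_E, and M/E an unramified extension of degree 2r (r ≥ 1). Let Λ ⊆ M be an O_E-submodule that is a full lattice (finitely generated over O_E and spanning M as an E-vector space) and that is stable under multiplication by every α ∈ M with α^{q^r+1} = 1. Then Λ = π_E^b · O_M for some integer b. -/

import Mathlib

open IsLocalRing

/-- A finite free algebra over an `x`-adically complete ring is `x`-adically complete. -/
theorem Ideal.isAdicComplete_span_algebraMap_of_free {R S : Type*} [CommRing R] [CommRing S]
    [Algebra R S] [Module.Finite R S] [Module.Free R S] (x : R)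
    [IsAdicComplete (Ideal.span {x}) R] : IsAdicComplete (Ideal.span {algebraMap R S x}) S := by
  let b := Module.Free.chooseBasis R S
  have key (n : ℕ) (y : S) : y ∈ Ideal.span {algebraMap R S x} ^ n ↔
      ∀ i, b.repr y i ∈ Ideal.span {x} ^ n := by
    simp only [Ideal.span_singleton_pow, Ideal.mem_span_singleton]
    constructor
    · rintro ⟨c, rfl⟩ i
      rw [← map_pow, ← Algebra.smul_def]
      simp
    · intro h
      choose c hc using h
      refine ⟨∑ i, c i • b i, ?_⟩
      rw [← map_pow, ← Algebra.smul_def, ← b.sum_repr y, Finset.smul_sum]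
      exact Finset.sum_congr rfl fun i _ ↦ by rw [hc, mul_smul]
  refine { haus' := fun y hy ↦ ?_, prec' := fun f hf ↦ ?_ }
  · simp only [SModEq.sub_mem, smul_eq_mul, Ideal.mul_top, sub_zero, key] at hy
    refine b.ext_elem fun i ↦ ?_
    rw [map_zero, Finsupp.zero_apply]
    refine IsHausdorff.haus' (I := Ideal.span {x}) _ fun n ↦ ?_
    simpa [SModEq.sub_mem] using hy n i
  · simp only [SModEq.sub_mem, smul_eq_mul, Ideal.mul_top, key, map_sub, Finsupp.sub_apply] at hf ⊢
    have hlim (i) : ∃ L : R, ∀ n, b.repr (f n) i - L ∈ Ideal.span {x} ^ n := by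
      obtain ⟨L, hL⟩ := IsPrecomplete.prec' (I := Ideal.span {x}) (fun n ↦ b.repr (f n) i)
        fun {m n} hmn ↦ by simpa [SModEq.sub_mem] using hf hmn i
      exact ⟨L, fun n ↦ by simpa [SModEq.sub_mem] using hL n⟩
    choose L hL using hlim
    exact ⟨∑ i, L i • b i, fun n i ↦ by simpa only [b.repr_sum_self] using hL i n⟩

/-- A finite free local extension whose residue degree equals its rank is unramified. -/
theorem IsLocalRing.map_maximalIdeal_eq_of_card {R S : Type*} [CommRing R] [CommRing S]
    [IsLocalRing R] [IsLocalRing S] [Algebra R S] [Module.Finite R S] [Module.Free R S]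
    [IsLocalHom (algebraMap R S)] [Finite (ResidueField R)]
    (h : Nat.card (ResidueField S) = Nat.card (ResidueField R) ^ Module.finrank R S) :
    (maximalIdeal R).map (algebraMap R S) = maximalIdeal S := by
  have hle : (maximalIdeal R).map (algebraMap R S) ≤ maximalIdeal S :=
    ((local_hom_TFAE (algebraMap R S)).out 0 2).mp ‹_›
  let I := (maximalIdeal R).map (algebraMap R S)
  have : Finite (R ⧸ maximalIdeal R) := ‹Finite (ResidueField R)›
  let := Ideal.Quotient.field (maximalIdeal R)
  have : Module.Finite (R ⧸ maximalIdeal R) (S ⧸ I) :=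
    Module.Finite.of_restrictScalars_finite R _ _
  have : Finite (S ⧸ I) := Module.finite_of_finite (R ⧸ maximalIdeal R)
  have hcard : Nat.card (S ⧸ I) = Nat.card (S ⧸ maximalIdeal S) := by
    rw [Module.natCard_eq_pow_finrank (K := R ⧸ maximalIdeal R)]
    refine Eq.trans ?_ h.symm
    congr 1
    exact finrank_quotient_map
  have hsurj := Ideal.Quotient.factor_surjective hle
  have := (Nat.bijective_iff_surjective_and_card _).mpr ⟨hsurj, hcard⟩
  refine hle.antisymm fun y hy ↦ ?_
  rw [← Ideal.Quotient.eq_zero_iff_mem] at hy ⊢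
  exact this.1 (by simpa using hy)

theorem FiniteField.adjoin_eq_top_of_orderOf {k l : Type*} [Field k] [Field l] [Algebra k l]
    [Finite l] {r : ℕ} (hl : Nat.card l = Nat.card k ^ (2 * r)) {a : l}
    (ha : orderOf a = Nat.card k ^ r + 1) : Algebra.adjoin k {a} = ⊤ := by
  have : Finite k := Finite.of_injective _ (algebraMap k l).injective
  have hq : 1 < Nat.card k := Finite.one_lt_card
  have hfin : Module.finrank k l = 2 * r := by
    rw [Module.natCard_eq_pow_finrank (K := k)] at hl
    exact Nat.pow_right_injective hq hl
  have hl0 : 0 < Module.finrank k l := Module.finrank_pos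
  let F := IntermediateField.adjoin k {a}
  have hF0 : 0 < Module.finrank k F := Module.finrank_pos
  have hdvd : Module.finrank k F ∣ 2 * r := hfin ▸ ⟨_, (Module.finrank_mul_finrank k F l).symm⟩
  have hpow : a ^ (Nat.card k ^ Module.finrank k F - 1) = 1 := by
    have ha0 : a ≠ 0 := by
      rintro rfl
      simp at ha
    have hF : (⟨a, IntermediateField.mem_adjoin_simple_self k a⟩ : F) ≠ 0 := by
      simpa [Subtype.ext_iff] using ha0
    have := Fintype.ofFinite F
    have h1 := FiniteField.pow_card_sub_one_eq_one _ hF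
    rw [← Nat.card_eq_fintype_card, Module.natCard_eq_pow_finrank (K := k)] at h1
    exact congrArg Subtype.val h1
  have hlt : r < Module.finrank k F := by
    by_contra! hle
    have h1 := Nat.one_lt_pow hF0.ne' hq
    have h2 := Nat.pow_le_pow_right hq.le hle
    have h3 := Nat.le_of_dvd (by omega) (ha ▸ orderOf_dvd_of_pow_eq_one hpow)
    omega
  have heq : Module.finrank k F = Module.finrank k l := by
    obtain ⟨c, hc⟩ := hdvd
    have hc1 : c = 1 := by
      rcases c with _ | _ | c
      · omega
      · rfl
      · nlinarith
    rw [hfin, hc, hc1, mul_one]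
  have htop : F = ⊤ := IntermediateField.eq_of_le_of_finrank_eq le_top
    (heq.trans IntermediateField.finrank_top'.symm)
  rw [← IntermediateField.adjoin_simple_toSubalgebra_of_isAlgebraic
      (Algebra.IsAlgebraic.isAlgebraic a),
    show IntermediateField.adjoin k {a} = ⊤ from htop, IntermediateField.top_toSubalgebra]

/-- In an unramified local extension, a lift of a generator of the residue field generates. -/
theorem IsLocalRing.adjoin_eq_top_of_residue {R S : Type*} [CommRing R] [CommRing S]
    [IsLocalRing R] [IsLocalRing S] [Algebra R S] [Module.Finite R S]
    [IsLocalHom (algebraMap R S)]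
    (hm : (maximalIdeal R).map (algebraMap R S) = maximalIdeal S) {a : S}
    (ha : Algebra.adjoin (ResidueField R) {residue S a} = ⊤) : Algebra.adjoin R {a} = ⊤ := by
  have hlift : ∀ y ∈ Algebra.adjoin (ResidueField R) {residue S a},
      ∃ s ∈ Algebra.adjoin R {a}, residue S s = y := by
    intro y hy
    induction hy using Algebra.adjoin_induction with
    | mem y hy => exact ⟨a, Algebra.self_mem_adjoin_singleton R a, hy.symm⟩
    | algebraMap c =>
      obtain ⟨c, rfl⟩ := residue_surjective c
      exact ⟨algebraMap R S c, Subalgebra.algebraMap_mem _ c, rfl⟩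
    | add y z _ _ hy hz =>
      obtain ⟨s, hs, rfl⟩ := hy
      obtain ⟨t, ht, rfl⟩ := hz
      exact ⟨s + t, add_mem hs ht, map_add _ _ _⟩
    | mul y z _ _ hy hz =>
      obtain ⟨s, hs, rfl⟩ := hy
      obtain ⟨t, ht, rfl⟩ := hz
      exact ⟨s * t, mul_mem hs ht, map_mul _ _ _⟩
  rw [← Algebra.toSubmodule_eq_top, ← top_le_iff]
  refine Submodule.le_of_le_smul_of_le_jacobson_bot (I := maximalIdeal R) Module.Finite.fg_top
    (maximalIdeal_le_jacobson _) fun y _ ↦ ?_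
  obtain ⟨s, hs, hsy⟩ := hlift (residue S y) (ha ▸ Algebra.mem_top)
  rw [← add_sub_cancel s y]
  refine Submodule.add_mem_sup hs ?_
  rw [Ideal.smul_top_eq_map, Submodule.restrictScalars_mem, hm, ← residue_eq_zero_iff, map_sub,
    hsy, sub_self]

/-- Roots of unity of order prime to the residue characteristic `p` lift from the residue field of
a local ring that is Henselian at `p`. -/
theorem IsLocalRing.exists_pow_eq_one_residue_eq {S : Type*} [CommRing S] [IsLocalRing S]
    (p : ℕ) [hp : Fact p.Prime] [HenselianRing S (Ideal.span {(p : S)})] [Finite (ResidueField S)]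
    [CharP (ResidueField S) p] {e : ℕ} (he : maximalIdeal S ^ e ≤ Ideal.span {(p : S)})
    {n : ℕ} (hn : n.Coprime p) {x : ResidueField S} (hx : x ^ n = 1) :
    ∃ a : S, a ^ n = 1 ∧ residue S a = x := by
  have hpm : residue S (p : S) = 0 := by rw [map_natCast, CharP.cast_eq_zero]
  have hspan : Ideal.span {(p : S)} ≤ maximalIdeal S := by
    rwa [Ideal.span_singleton_le_iff_mem, ← residue_eq_zero_iff]
  have hn0 : n ≠ 0 := by
    rintro rfl
    exact hp.out.one_lt.ne' (by simpa using hn)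
  have hx0 : x ≠ 0 := by
    rintro rfl
    simp [hn0] at hx
  have := Fintype.ofFinite (ResidueField S)
  obtain ⟨f, -, hf⟩ := FiniteField.card (ResidueField S) p
  obtain ⟨y, rfl⟩ := residue_surjective x
  let z := y ^ p ^ (f * e : ℕ)
  have hz : residue S z = residue S y := by
    rw [map_pow, pow_mul, ← hf, FiniteField.pow_card_pow]
  have hroot : z ^ n - 1 ∈ Ideal.span {(p : S)} := by
    obtain ⟨c, hc⟩ := exists_add_pow_prime_pow_eq hp.out (y ^ n - 1) 1 (f * e : ℕ)
    have hmem : (y ^ n - 1) ^ p ^ (f * e : ℕ) ∈ Ideal.span {(p : S)} := by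
      refine he (Ideal.pow_le_pow_right ?_ (Ideal.pow_mem_pow ?_ _))
      · exact (Nat.le_mul_of_pos_left e f.pos).trans (Nat.lt_pow_self hp.out.one_lt).le
      · rw [← residue_eq_zero_iff, map_sub, map_pow, hx, map_one, sub_self]
    have hzn : z ^ n - 1 = (y ^ n - 1) ^ p ^ (f * e : ℕ) + p * ((y ^ n - 1) * c) := by
      have : z ^ n = (y ^ n - 1 + 1) ^ p ^ (f * e : ℕ) := by
        rw [sub_add_cancel, ← pow_mul, ← pow_mul, mul_comm]
      rw [this, hc]
      ring
    rw [hzn]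
    exact add_mem hmem (Ideal.mul_mem_right _ _ (Ideal.mem_span_singleton_self _))
  have hunit : IsUnit (n * z ^ (n - 1) : S) := by
    rw [← residue_ne_zero_iff_isUnit, map_mul, map_natCast, map_pow, hz]
    refine mul_ne_zero ?_ (pow_ne_zero _ hx0)
    rwa [Ne, CharP.cast_eq_zero_iff _ p, ← hp.out.coprime_iff_not_dvd, Nat.coprime_comm]
  obtain ⟨a, ha, haz⟩ := HenselianRing.is_henselian (I := Ideal.span {(p : S)})
    (Polynomial.X ^ n - 1 : Polynomial S) (Polynomial.monic_X_pow_sub_C 1 hn0) z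
    (by simpa using hroot)
    (by simpa [Polynomial.derivative_X_pow] using
        hunit.map (Ideal.Quotient.mk (Ideal.span {(p : S)})))
  refine ⟨a, by simpa [sub_eq_zero] using ha, ?_⟩
  rw [← hz, ← sub_eq_zero, ← map_sub, residue_eq_zero_iff]
  exact hspan haz

/-- A nonzero finitely generated submodule of the fraction field of a discrete valuation ring is
generated by a power of the uniformizer. -/
theorem IsDiscreteValuationRing.exists_zpow_of_fg {S K : Type*} [CommRing S] [IsDomain S]
    [IsDiscreteValuationRing S] [Field K] [Algebra S K] [IsFractionRing S K] {ϖ : S}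
    (hϖ : Irreducible ϖ) (N : Submodule S K) (hN : N.FG) (hN0 : N ≠ ⊥) :
    ∃ b : ℤ, N = Submodule.span S {algebraMap S K ϖ ^ b} := by
  let I : FractionalIdeal (nonZeroDivisors S) K :=
    ⟨N, FractionalIdeal.isFractional_of_fg hN⟩
  obtain ⟨⟨x, hx⟩⟩ := FractionalIdeal.isPrincipal I
  change N = _ at hx
  have hx0 : x ≠ 0 := by rintro rfl; simp_all
  obtain ⟨b, u, rfl⟩ := exists_units_eq_smul_zpow_of_irreducible hϖ hx0
  exact ⟨b, hx.trans (Submodule.span_singleton_group_smul_eq S u _)⟩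

theorem FiniteField.exists_orderOf_eq_pow_add_one {k : Type*} [Field k] [Finite k] {q r : ℕ}
    (h : Nat.card k = q ^ (2 * r)) : ∃ x : k, orderOf x = q ^ r + 1 := by
  obtain ⟨g, hg⟩ := IsCyclic.exists_ofOrder_eq_natCard (α := kˣ)
  have hcard : Nat.card kˣ = (q ^ r + 1) * (q ^ r - 1) := by
    rw [Nat.card_units, h, mul_comm 2, pow_mul, ← Nat.sq_sub_sq, one_pow]
  have hpos : q ^ r - 1 ≠ 0 := by
    intro h0
    rw [h0, mul_zero] at hcard
    exact Nat.card_pos.ne' hcard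
  refine ⟨((g ^ (q ^ r - 1) : kˣ) : k), ?_⟩
  rw [orderOf_units, orderOf_pow_of_dvd hpos (hg ▸ hcard ▸ Dvd.intro_left _ rfl), hg, hcard,
    Nat.mul_div_cancel _ (Nat.pos_of_ne_zero hpos)]

theorem PadicInt.charP_residueField (p : ℕ) [hp : Fact p.Prime] (S : Type*) [CommRing S]
    [IsLocalRing S] [Algebra ℤ_[p] S] [IsLocalHom (algebraMap ℤ_[p] S)] :
    CharP (ResidueField S) p := by
  have h : ((p : ℕ) : ResidueField S) = 0 := by
    rw [← map_natCast (residue S), ← map_natCast (algebraMap ℤ_[p] S), residue_eq_zero_iff,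
      mem_maximalIdeal, map_mem_nonunits_iff]
    exact PadicInt.p_nonunit
  obtain ⟨c, hc⟩ := CharP.exists (ResidueField S)
  have hcp := (CharP.cast_eq_zero_iff (ResidueField S) c p).mp h
  obtain rfl := (hp.out.eq_one_or_self_of_dvd c hcp).resolve_left 
    (CharP.char_ne_one (ResidueField S) c)
  exact hc

theorem PadicInt.exists_adjoin_eq_top_of_card_residueField (p : ℕ) [hp : Fact p.Prime]
    {A B : Type*} [CommRing A] [CommRing B] [IsDomain B] [IsLocalRing A]
    [IsDiscreteValuationRing B] [Algebra ℤ_[p] A] [Algebra ℤ_[p] B] [Algebra A B]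
    [FaithfulSMul ℤ_[p] A] [Module.Finite ℤ_[p] A] [Module.Finite ℤ_[p] B] [Module.Free ℤ_[p] B]
    [Module.Finite A B] [IsLocalHom (algebraMap A B)] {r : ℕ} (hr : r ≠ 0)
    (hm : (maximalIdeal A).map (algebraMap A B) = maximalIdeal B)
    (hcard : Nat.card (ResidueField B) = Nat.card (ResidueField A) ^ (2 * r)) :
    ∃ a : B, a ^ (Nat.card (ResidueField A) ^ r + 1) = 1 ∧ Algebra.adjoin A {a} = ⊤ := by
  have : Finite (ResidueField A) := ResidueField.finite_of_finite (R := ℤ_[p]) inferInstance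
  have : Finite (ResidueField B) := ResidueField.finite_of_finite (R := ℤ_[p]) inferInstance
  have hpB : (p : B) ≠ 0 := by
    have := FaithfulSMul.algebraMap_injective ℤ_[p] B
    rw [← map_natCast (algebraMap ℤ_[p] B), Ne, map_eq_zero_iff _ this]
    exact PadicInt.prime_p.ne_zero
  have : CharP (ResidueField A) p := PadicInt.charP_residueField p A
  have : CharP (ResidueField B) p := PadicInt.charP_residueField p B
  have : IsAdicComplete (Ideal.span {(p : ℤ_[p])}) ℤ_[p] := by
    rw [← PadicInt.maximalIdeal_eq_span_p]
    infer_instance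
  have : IsAdicComplete (Ideal.span {(p : B)}) B := by
    simpa using Ideal.isAdicComplete_span_algebraMap_of_free (S := B) (p : ℤ_[p])
  obtain ⟨e, he⟩ := exists_maximalIdeal_pow_eq_of_principal B inferInstance (Ideal.span {(p : B)})
    (by simpa using hpB)
  obtain ⟨x, hx⟩ := FiniteField.exists_orderOf_eq_pow_add_one hcard
  have hcop : (Nat.card (ResidueField A) ^ r + 1).Coprime p := by
    have := Fintype.ofFinite (ResidueField A)
    obtain ⟨f, -, hf⟩ := FiniteField.card (ResidueField A) p
    have hdvd : p ∣ Nat.card (ResidueField A) ^ r := by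
      rw [Nat.card_eq_fintype_card, hf]
      exact dvd_pow (dvd_pow_self p f.ne_zero) hr
    rw [Nat.coprime_comm, hp.out.coprime_iff_not_dvd]
    exact fun h ↦ hp.out.one_lt.ne' (Nat.dvd_one.mp ((Nat.dvd_add_right hdvd).mp h))
  obtain ⟨a, ha, hax⟩ := exists_pow_eq_one_residue_eq p he.ge hcop (hx ▸ pow_orderOf_eq_one x)
  refine ⟨a, ha, adjoin_eq_top_of_residue hm ?_⟩
  rw [hax]
  exact FiniteField.adjoin_eq_top_of_orderOf hcard hx

theorem PadicInt.isDiscreteValuationRing_integralClosure (p : ℕ) [Fact p.Prime] (K : Type*)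
    [Field K] [Algebra ℚ_[p] K] [FiniteDimensional ℚ_[p] K] [Algebra ℤ_[p] K]
    [IsScalarTower ℤ_[p] ℚ_[p] K] [IsLocalRing (integralClosure ℤ_[p] K)] :
    IsDiscreteValuationRing (integralClosure ℤ_[p] K) := by
  have hD := integralClosure.isDedekindDomain ℤ_[p] ℚ_[p] K
  have : FaithfulSMul ℤ_[p] K := .trans ℤ_[p] ℚ_[p] K
  refine ((IsDiscreteValuationRing.TFAE _ fun h ↦ ?_).out 0 2).mpr hD
  exact IsDiscreteValuationRing.not_isField ℤ_[p] (isField_of_isIntegral_of_isField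
    (FaithfulSMul.algebraMap_injective ℤ_[p] (integralClosure ℤ_[p] K)) h)


/-- A full `O_E`-lattice in an unramified extension `M/E` of degree `2r` which is stable under the
`(q^r+1)`-st roots of unity is a power of the uniformizer times `O_M`. -/
theorem Submodule.exists_eq_zpow_mul_of_rootsOfUnity_stable (p q r : ℕ) [Fact p.Prime]
    (hr : 1 ≤ r)
    {E M : Type*} [Field E] [Field M]
    [Algebra ℚ_[p] E] [FiniteDimensional ℚ_[p] E]
    [Algebra ℚ_[p] M] [FiniteDimensional ℚ_[p] M]
    [Algebra ℤ_[p] E] [IsScalarTower ℤ_[p] ℚ_[p] E]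
    [Algebra ℤ_[p] M] [IsScalarTower ℤ_[p] ℚ_[p] M]
    [Algebra E M] [IsScalarTower ℚ_[p] E M] [IsScalarTower ℤ_[p] E M]
    [IsLocalRing (integralClosure ℤ_[p] E)] [IsLocalRing (integralClosure ℤ_[p] M)]
    (hEM : Module.finrank E M = 2 * r)
    (hqE : Nat.card (ResidueField (integralClosure ℤ_[p] E)) = q)
    (hqM : Nat.card (ResidueField (integralClosure ℤ_[p] M)) = q ^ (2 * r))
    (πE : E) (hπEmem : πE ∈ integralClosure ℤ_[p] E)
    (hπE : maximalIdeal (integralClosure ℤ_[p] E) =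
      Ideal.span {(⟨πE, hπEmem⟩ : integralClosure ℤ_[p] E)})
    (Λ : Submodule (integralClosure ℤ_[p] E) M)
    (hΛfg : Λ.FG) (hΛfull : Submodule.span E (Λ : Set M) = ⊤)
    (hΛstab : ∀ α : M, α ^ (q ^ r + 1) = 1 → ∀ z ∈ Λ, α * z ∈ Λ) :
    ∃ b : ℤ, ∀ z : M,
      z ∈ Λ ↔ ∃ w ∈ integralClosure ℤ_[p] M, z = algebraMap E M πE ^ b * w := by
  have := PadicInt.isDiscreteValuationRing_integralClosure p E
  have := PadicInt.isDiscreteValuationRing_integralClosure p M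
  have : IsFractionRing (integralClosure ℤ_[p] E) E :=
    integralClosure.isFractionRing_of_finite_extension ℚ_[p] E
  have : IsFractionRing (integralClosure ℤ_[p] M) M :=
    integralClosure.isFractionRing_of_finite_extension ℚ_[p] M
  have : Module.Finite ℤ_[p] (integralClosure ℤ_[p] E) := IsIntegralClosure.finite ℤ_[p] ℚ_[p] E _
  have : Module.Finite ℤ_[p] (integralClosure ℤ_[p] M) := IsIntegralClosure.finite ℤ_[p] ℚ_[p] M _
  have : FaithfulSMul ℤ_[p] E := .trans ℤ_[p] ℚ_[p] E
  have : FaithfulSMul ℤ_[p] M := .trans ℤ_[p] ℚ_[p] M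
  have hAM (x : integralClosure ℤ_[p] E) : algebraMap _ M x = algebraMap E M x :=
    IsScalarTower.algebraMap_apply _ E M x
  let f : integralClosure ℤ_[p] E →+* integralClosure ℤ_[p] M :=
    (algebraMap (integralClosure ℤ_[p] E) M).codRestrict (integralClosure ℤ_[p] M) fun x ↦ by
      rw [hAM]
      exact x.2.algebraMap
  let := f.toAlgebra
  have : IsScalarTower (integralClosure ℤ_[p] E) (integralClosure ℤ_[p] M) M :=
    .of_algebraMap_eq fun _ ↦ rfl
  have : IsScalarTower ℤ_[p] (integralClosure ℤ_[p] E) (integralClosure ℤ_[p] M) :=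
    .of_algebraMap_eq fun x ↦ Subtype.ext (IsScalarTower.algebraMap_apply ℤ_[p] E M x)
  have : FaithfulSMul (integralClosure ℤ_[p] E) M := .trans _ E M
  have : FaithfulSMul (integralClosure ℤ_[p] E) (integralClosure ℤ_[p] M) :=
    .tower_bot _ _ M
  have : Module.Finite (integralClosure ℤ_[p] E) (integralClosure ℤ_[p] M) :=
    .of_restrictScalars_finite ℤ_[p] _ _
  have : Finite (ResidueField (integralClosure ℤ_[p] E)) :=
    ResidueField.finite_of_finite (R := ℤ_[p]) inferInstance
  have hrank : Module.finrank (integralClosure ℤ_[p] E) (integralClosure ℤ_[p] M) = 2 * r :=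
    (IsFractionRing.finrank_eq (integralClosure ℤ_[p] E) E
      (integralClosure ℤ_[p] M) M).symm.trans hEM
  subst hqE
  have hmax := IsLocalRing.map_maximalIdeal_eq_of_card (hqM.trans (by rw [hrank]))
  obtain ⟨a, ha, hadj⟩ := PadicInt.exists_adjoin_eq_top_of_card_residueField p (by omega) hmax hqM
  have hmem (w : integralClosure ℤ_[p] M) : ∀ z ∈ Λ, (w : M) * z ∈ Λ := by
    have hw : w ∈ Algebra.adjoin (integralClosure ℤ_[p] E) {a} := hadj ▸ Algebra.mem_top
    induction hw using Algebra.adjoin_induction with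
    | mem w hw =>
      obtain rfl : w = a := hw
      exact hΛstab w (congrArg Subtype.val ha)
    | algebraMap c =>
      intro z hz
      have := Λ.smul_mem c hz
      rwa [Algebra.smul_def] at this
    | add v w _ _ hv hw =>
      intro z hz
      rw [Subalgebra.coe_add, add_mul]
      exact add_mem (hv z hz) (hw z hz)
    | mul v w _ _ hv hw =>
      intro z hz
      rw [Subalgebra.coe_mul, mul_assoc]
      exact hv _ (hw z hz)
  let N : Submodule (integralClosure ℤ_[p] M) M := { Λ with smul_mem' := fun w z hz ↦ hmem w z hz }
  have hNfg : N.FG := by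
    have : (N.restrictScalars (integralClosure ℤ_[p] E)).FG := hΛfg
    exact this.of_restrictScalars
  have hN0 : N ≠ ⊥ := by
    intro h0
    have hΛ : (Λ : Set M) = {0} := congrArg (fun L : Submodule _ M ↦ (L : Set M)) h0
    rw [hΛ, Submodule.span_zero_singleton] at hΛfull
    exact bot_ne_top hΛfull
  have hirr : Irreducible (algebraMap _ (integralClosure ℤ_[p] M)
      (⟨πE, hπEmem⟩ : integralClosure ℤ_[p] E)) := by
    rw [IsDiscreteValuationRing.irreducible_iff_uniformizer, ← hmax, hπE, Ideal.map_span,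
      Set.image_singleton]
  obtain ⟨b, hb⟩ := IsDiscreteValuationRing.exists_zpow_of_fg (K := M) hirr N hNfg hN0
  refine ⟨b, fun z ↦ ?_⟩
  change z ∈ N ↔ _
  rw [hb, Submodule.mem_span_singleton]
  constructor
  · rintro ⟨w, rfl⟩
    exact ⟨w, w.2, mul_comm _ _⟩
  · rintro ⟨w, hw, rfl⟩
    exact ⟨⟨w, hw⟩, mul_comm _ _⟩

/-- Let `E` be a finite extension of `ℚ_p` with residue cardinality `q`
and uniformizer `π_E`, and `M/E` unramified of degree `2r`.  If `Λ ⊆ M` is a full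
`O_E`-lattice (finitely generated and spanning `M` over `E`) stable under multiplication by
every `α ∈ M` with `α^{q^r+1} = 1`, then `Λ = π_E^b · O_M` for some integer `b`. -/
theorem stmt_14 (p q r : ℕ) [Fact p.Prime] (hr : 1 ≤ r)
    {E M : Type*} [Field E] [Field M]
    [Algebra ℚ_[p] E] [FiniteDimensional ℚ_[p] E]
    [Algebra ℚ_[p] M] [FiniteDimensional ℚ_[p] M]
    [Algebra ℤ_[p] E] [IsScalarTower ℤ_[p] ℚ_[p] E]
    [Algebra ℤ_[p] M] [IsScalarTower ℤ_[p] ℚ_[p] M]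
    [Algebra E M] [IsScalarTower ℚ_[p] E M] [IsScalarTower ℤ_[p] E M]
    [IsLocalRing (integralClosure ℤ_[p] E)] [IsLocalRing (integralClosure ℤ_[p] M)]
    -- `M/E` unramified of degree `2r`: residue degree equals the field degree
    (hEM : Module.finrank E M = 2 * r)
    (hqE : Nat.card (ResidueField (integralClosure ℤ_[p] E)) = q)
    (hqM : Nat.card (ResidueField (integralClosure ℤ_[p] M)) = q ^ (2 * r))
    -- a uniformizer `π_E` of `E`
    (πE : E) (hπEmem : πE ∈ integralClosure ℤ_[p] E)
    (hπE : maximalIdeal (integralClosure ℤ_[p] E) =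
      Ideal.span {(⟨πE, hπEmem⟩ : integralClosure ℤ_[p] E)})
    -- the action of the ring of integers `O_E` on `M`
    [Algebra (integralClosure ℤ_[p] E) M] [IsScalarTower (integralClosure ℤ_[p] E) E M]
    -- a full `O_E`-lattice `Λ` in `M`, stable under the roots of unity of order
    -- dividing `q^r + 1`
    (Λ : Submodule (integralClosure ℤ_[p] E) M)
    (hΛfg : Λ.FG) (hΛfull : Submodule.span E (Λ : Set M) = ⊤)
    (hΛstab : ∀ α : M, α ^ (q ^ r + 1) = 1 → ∀ z ∈ Λ, α * z ∈ Λ) :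
    ∃ b : ℤ, ∀ z : M,
      z ∈ Λ ↔ ∃ w ∈ integralClosure ℤ_[p] M, z = algebraMap E M πE ^ b * w := by
  exact Λ.exists_eq_zpow_mul_of_rootsOfUnity_stable p q r hr hEM hqE hqM πE hπEmem hπE hΛfg hΛfull
    hΛstab
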